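/- Let V and W be 3-dimensional subspaces of ℝ⁷, each closed under the cross product (a × b ∈ V for all a, b ∈ V, and likewise for W). Then dim(V ∩ W) ≠ 2. Consequently two associative 3-planes intersect in dimension 0, 1, or 3. -/

import Mathlib

/-!
STATEMENT 0: For linearly independent u, v, w ∈ ℝ⁷, the subspace
V = span{u,v,w} is closed under the G₂ cross product iff the 1-form
x ↦ (∗φ)(u,v,w,x) vanishes identically.
-/

noncomputable section

/-- ℝ⁷ with coordinates (x₀,x₁,x₂,x₃,y₁,y₂,y₃) indexed 0,…,6. -/
abbrev V7 := Fin 7 → ℝ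

/-- Standard basis vector. -/
def e7 (k : Fin 7) : V7 := fun j => if j = k then 1 else 0

/-- The wedge of three coordinate 1-forms, `(e^p ∧ e^q ∧ e^r)(a,b,c)`. -/
def form3 (p q r : Fin 7) (a b c : V7) : ℝ :=
  Matrix.det !![a p, a q, a r; b p, b q, b r; c p, c q, c r]

/-- The standard G₂ 3-form φ = f¹∧f²∧f³ + f¹∧(e⁰∧e¹ − e²∧e³)
    + f²∧(e⁰∧e² − e³∧e¹) + f³∧(e⁰∧e³ − e¹∧e²), with e⁰,e¹,e²,e³,f¹,f²,f³
    the coordinate 1-forms indexed 0,1,2,3,4,5,6. -/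
def phi7 (a b c : V7) : ℝ :=
  form3 4 5 6 a b c
    + (form3 4 0 1 a b c - form3 4 2 3 a b c)
    + (form3 5 0 2 a b c - form3 5 3 1 a b c)
    + (form3 6 0 3 a b c - form3 6 1 2 a b c)

/-- The wedge of four coordinate 1-forms. -/
def form4 (p q r s : Fin 7) (a b c d : V7) : ℝ :=
  Matrix.det !![a p, a q, a r, a s; b p, b q, b r, b s;
                c p, c q, c r, c s; d p, d q, d r, d s]

/-- The dual 4-form ∗φ = e⁰∧e¹∧e²∧e³ − f²∧f³∧(e⁰∧e¹ − e²∧e³)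
    − f³∧f¹∧(e⁰∧e² − e³∧e¹) − f¹∧f²∧(e⁰∧e³ − e¹∧e²). -/
def starphi7 (a b c d : V7) : ℝ :=
  form4 0 1 2 3 a b c d
    - (form4 5 6 0 1 a b c d - form4 5 6 2 3 a b c d)
    - (form4 6 4 0 2 a b c d - form4 6 4 3 1 a b c d)
    - (form4 4 5 0 3 a b c d - form4 4 5 1 2 a b c d)

/-- The cross product, characterized by ⟨u × v, z⟩ = φ(u,v,z) for the
    standard inner product; its k-th coordinate is φ(u,v,e_k). -/
def cross7 (a b : V7) : V7 := fun k => phi7 a b (e7 k)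

/-! For linearly independent `a, b`, the vector `a × b` is orthogonal to both because `φ` is
alternating, and nonzero because `a × (a × b) = ⟨a, b⟩ a - ⟨a, a⟩ b`. Hence `a, b, a × b` are
linearly independent, and a subspace closed under `×` that has dimension at least two has dimension
at least three. The intersection of two closed subspaces is closed, so its dimension is not two. -/

open Module Submodule

theorem eq_zero_of_mem_span_of_dotProduct_eq_zero {n R : Type*} [Fintype n] [CommRing R]
    [LinearOrder R] [IsStrictOrderedRing R] {s : Set (n → R)} {x : n → R}
    (hx : x ∈ span R s) (hs : ∀ y ∈ s, x ⬝ᵥ y = 0) : x = 0 := by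
  have hle : span R s ≤ (dotProductBilin R R x).ker := span_le.2 hs
  exact dotProduct_self_eq_zero.1 (hle hx)

theorem form3_self_left (p q r : Fin 7) (a b : V7) : form3 p q r a b a = 0 :=
  Matrix.det_zero_of_row_eq (i := 0) (j := 2) (by decide) rfl

theorem form3_self_right (p q r : Fin 7) (a b : V7) : form3 p q r a b b = 0 :=
  Matrix.det_zero_of_row_eq (i := 1) (j := 2) (by decide) rfl

theorem cross7_eq (a b : V7) : cross7 a b = ![
    a 1 * b 4 - a 4 * b 1 + (a 2 * b 5 - a 5 * b 2) + (a 3 * b 6 - a 6 * b 3),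
    a 4 * b 0 - a 0 * b 4 + (a 3 * b 5 - a 5 * b 3) + (a 6 * b 2 - a 2 * b 6),
    a 5 * b 0 - a 0 * b 5 + (a 4 * b 3 - a 3 * b 4) + (a 1 * b 6 - a 6 * b 1),
    a 6 * b 0 - a 0 * b 6 + (a 2 * b 4 - a 4 * b 2) + (a 5 * b 1 - a 1 * b 5),
    a 5 * b 6 - a 6 * b 5 + (a 0 * b 1 - a 1 * b 0) - (a 2 * b 3 - a 3 * b 2),
    a 6 * b 4 - a 4 * b 6 + (a 0 * b 2 - a 2 * b 0) - (a 3 * b 1 - a 1 * b 3),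
    a 4 * b 5 - a 5 * b 4 + (a 0 * b 3 - a 3 * b 0) - (a 1 * b 2 - a 2 * b 1)] := by
  ext k
  fin_cases k <;>
    simp only [cross7, phi7, form3, e7, Matrix.det_fin_three, Matrix.of_apply, Matrix.cons_val,
      Fin.reduceEq, Fin.reduceFinMk, Fin.zero_eta, Fin.mk_one, if_true, if_false] <;>
    ring

theorem cross7_dotProduct (a b c : V7) : cross7 a b ⬝ᵥ c = phi7 a b c := by
  simp only [cross7_eq, phi7, form3, dotProduct, Fin.sum_univ_seven, Matrix.det_fin_three,
    Matrix.of_apply, Matrix.cons_val]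
  ring

theorem cross7_dotProduct_left (a b : V7) : cross7 a b ⬝ᵥ a = 0 := by
  simp [cross7_dotProduct, phi7, form3_self_left]

theorem cross7_dotProduct_right (a b : V7) : cross7 a b ⬝ᵥ b = 0 := by
  simp [cross7_dotProduct, phi7, form3_self_right]

theorem cross7_zero (a : V7) : cross7 a 0 = 0 := by
  simp [cross7_eq]

theorem cross7_cross7_self (a b : V7) :
    cross7 a (cross7 a b) = (a ⬝ᵥ b) • a - (a ⬝ᵥ a) • b := by
  ext k
  fin_cases k <;>
    simp only [cross7_eq, dotProduct, Fin.sum_univ_seven, Matrix.cons_val, Pi.sub_apply,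
      Pi.smul_apply, smul_eq_mul, Fin.reduceFinMk, Fin.zero_eta, Fin.mk_one] <;>
    ring

theorem cross7_ne_zero_of_linearIndependent {a b : V7} (hab : LinearIndependent ℝ ![a, b]) :
    cross7 a b ≠ 0 := by
  intro hcross
  have hcomb : (a ⬝ᵥ b) • a + (-(a ⬝ᵥ a)) • b = 0 := by
    rw [neg_smul, ← sub_eq_add_neg, ← cross7_cross7_self, hcross, cross7_zero]
  have haa : -(a ⬝ᵥ a) = 0 := (LinearIndependent.pair_iff.1 hab _ _ hcomb).2
  exact hab.ne_zero 0 (dotProduct_self_eq_zero.1 (neg_eq_zero.1 haa))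

theorem cross7_notMem_span_pair {a b : V7} (hab : LinearIndependent ℝ ![a, b]) :
    cross7 a b ∉ span ℝ {a, b} := fun hmem ↦
  cross7_ne_zero_of_linearIndependent hab <|
    eq_zero_of_mem_span_of_dotProduct_eq_zero hmem <| by
      rintro y (rfl | rfl)
      · exact cross7_dotProduct_left y b
      · exact cross7_dotProduct_right a y

theorem linearIndependent_cross7 {a b : V7} (hab : LinearIndependent ℝ ![a, b]) :
    LinearIndependent ℝ ![cross7 a b, a, b] := by
  refine linearIndependent_finCons.2 ⟨hab, ?_⟩
  rw [Matrix.range_cons_cons_empty]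
  exact cross7_notMem_span_pair hab

/-- A subspace of `ℝ⁷` that is closed under the cross product, of arbitrary dimension; the
associative 3-planes are those of dimension three. -/
def IsCross7Closed (U : Submodule ℝ V7) : Prop :=
  ∀ a ∈ U, ∀ b ∈ U, cross7 a b ∈ U

namespace IsCross7Closed

variable {U V W : Submodule ℝ V7}

theorem inf (hV : IsCross7Closed V) (hW : IsCross7Closed W) : IsCross7Closed (V ⊓ W) :=
  fun a ha b hb ↦ ⟨hV a ha.1 b hb.1, hW a ha.2 b hb.2⟩

theorem three_le_finrank (hU : IsCross7Closed U) (hdim : 2 ≤ finrank ℝ U) :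
    3 ≤ finrank ℝ U := by
  obtain ⟨v, hv⟩ := exists_linearIndependent_of_le_finrank hdim
  have hab : LinearIndependent ℝ ![(v 0 : V7), (v 1 : V7)] := by
    have hcoe : U.subtype ∘ v = ![(v 0 : V7), (v 1 : V7)] :=
      funext (Fin.forall_fin_two.2 ⟨rfl, rfl⟩)
    exact hcoe ▸ hv.map' U.subtype U.ker_subtype
  have hmem : ∀ i, ![cross7 (v 0) (v 1), (v 0 : V7), (v 1 : V7)] i ∈ U :=
    Fin.forall_fin_succ.2 ⟨hU _ (v 0).2 _ (v 1).2, Fin.forall_fin_two.2 ⟨(v 0).2, (v 1).2⟩⟩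
  calc
    3 = finrank ℝ (span ℝ (Set.range ![cross7 (v 0) (v 1), (v 0 : V7), (v 1 : V7)])) :=
      (finrank_span_eq_card (linearIndependent_cross7 hab)).symm
    _ ≤ finrank ℝ U := finrank_mono (span_le.2 (Set.range_subset_iff.2 hmem))

end IsCross7Closed

theorem stmt16_general (V W : Submodule ℝ V7) (hV3 : finrank ℝ V ≤ 3)
    (hV : IsCross7Closed V) (hW : IsCross7Closed W) :
    finrank ℝ ↥(V ⊓ W) ≠ 2 ∧
      (finrank ℝ ↥(V ⊓ W) = 0 ∨ finrank ℝ ↥(V ⊓ W) = 1 ∨ finrank ℝ ↥(V ⊓ W) = 3) := by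
  have hle : finrank ℝ ↥(V ⊓ W) ≤ 3 := (finrank_mono inf_le_left).trans hV3
  have hthree : 2 ≤ finrank ℝ ↥(V ⊓ W) → 3 ≤ finrank ℝ ↥(V ⊓ W) := (hV.inf hW).three_le_finrank
  omega

/-- two associative 3-planes in ℝ⁷ (3-dimensional subspaces
    closed under the cross product) cannot intersect in dimension 2;
    consequently they intersect in dimension 0, 1, or 3. -/
theorem stmt16 (V W : Submodule ℝ V7)
    (hV3 : Module.finrank ℝ V = 3) (hW3 : Module.finrank ℝ W = 3)
    (hV : ∀ a ∈ V, ∀ b ∈ V, cross7 a b ∈ V)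
    (hW : ∀ a ∈ W, ∀ b ∈ W, cross7 a b ∈ W) :
    Module.finrank ℝ ↥(V ⊓ W) ≠ 2 ∧
      (Module.finrank ℝ ↥(V ⊓ W) = 0 ∨ Module.finrank ℝ ↥(V ⊓ W) = 1 ∨
        Module.finrank ℝ ↥(V ⊓ W) = 3) :=
  stmt16_general V W hV3.le hV hW
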